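/- Let F be a totally real cubic number field (a number field with [F:ℚ] = 3 all of whose embeddings into ℂ have image in ℝ), with real embeddings σ₁, σ₂, σ₃ : F → ℝ, and let 𝓞 be an order in F with discriminant Δ(𝓞). Then for every real number R > |Δ(𝓞)|^{1/4}, there exists γ ∈ 𝓞 with γ ∉ ℚ such that |σ₁(γ)| < 1, |σ₂(γ)| < R and |σ₃(γ)| < R. -/

import Mathlib

open Module

/-!
A `ℤ`-basis `v` of the order is a `ℚ`-basis of `F`, and `Δ = det M ^ 2` for the real matrix
`M = (σⱼ vᵢ)`, because the real embeddings exhaust all complex embeddings. Minkowski's convex body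
theorem for the linear forms `c ↦ ∑ i, cᵢ σⱼ(vᵢ)` gives a nonzero `γ` in the order with
`|σⱼ γ| < rⱼ` for all `j` as soon as `√|Δ| < ∏ rⱼ`; here `r = (1, R, R)`. A rational `γ` would be
an ordinary integer, and `|σ₁ γ| < 1` would force it to vanish.
-/

open MeasureTheory in
theorem volume_pi_Ioo_neg_self {ι : Type*} [Fintype ι] {r : ι → ℝ} (hr : ∀ i, 0 ≤ r i) :
    volume (Set.univ.pi fun i ↦ Set.Ioo (-r i) (r i)) =
      ENNReal.ofReal ((∏ i, r i) * 2 ^ Fintype.card ι) := by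
  rw [Real.volume_pi_Ioo, ← ENNReal.ofReal_prod_of_nonneg fun i _ ↦ by linarith [hr i]]
  simp only [sub_neg_eq_add, ← mul_two, Finset.prod_mul_distrib, Finset.prod_const,
    Finset.card_univ]

open MeasureTheory in
theorem exists_int_ne_zero_mem_of_two_pow_card_lt_volume {ι : Type*} [Fintype ι]
    {s : Set (ι → ℝ)} (h_symm : ∀ x ∈ s, -x ∈ s) (h_conv : Convex ℝ s)
    (h_vol : 2 ^ Fintype.card ι < volume s) :
    ∃ c : ι → ℤ, c ≠ 0 ∧ (fun i ↦ (c i : ℝ)) ∈ s := by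
  let L := (Submodule.span ℤ (Set.range (Pi.basisFun ℝ ι))).toAddSubgroup
  have : Countable L :=
    inferInstanceAs (Countable (Submodule.span ℤ (Set.range (Pi.basisFun ℝ ι))))
  have covolume_eq_one : volume (ZSpan.fundamentalDomain (Pi.basisFun ℝ ι)) = 1 := by
    rw [ZSpan.fundamentalDomain_pi_basisFun, Real.volume_pi_Ico]
    simp
  obtain ⟨⟨x, hxL⟩, hx_ne, hxs⟩ :=
    exists_ne_zero_mem_lattice_of_measure_mul_two_pow_lt_measure (L := L)
      (ZSpan.isAddFundamentalDomain' (Pi.basisFun ℝ ι) volume) h_symm h_conv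
      (by rwa [covolume_eq_one, one_mul, finrank_fintype_fun_eq_card])
  choose c hc using ((Pi.basisFun ℝ ι).mem_span_iff_repr_mem ℤ x).mp hxL
  obtain rfl : (fun i ↦ (c i : ℝ)) = x := funext hc
  refine ⟨c, ?_, hxs⟩
  rintro rfl
  exact hx_ne (Subtype.ext (funext fun _ ↦ Int.cast_zero))

/-- **Minkowski's theorem on linear forms**. -/
theorem exists_int_ne_zero_forall_abs_mulVec_lt {ι : Type*} [Fintype ι] [DecidableEq ι]
    {M : Matrix ι ι ℝ} (hM : M.det ≠ 0) {r : ι → ℝ} (hr : ∀ j, 0 ≤ r j)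
    (hMr : |M.det| < ∏ j, r j) :
    ∃ c : ι → ℤ, c ≠ 0 ∧ ∀ j, |M.mulVec (fun i ↦ (c i : ℝ)) j| < r j := by
  let box : Set (ι → ℝ) := Set.univ.pi fun j ↦ Set.Ioo (-r j) (r j)
  have mem_box {y : ι → ℝ} : y ∈ box ↔ ∀ j, |y j| < r j := by
    simp only [box, Set.mem_univ_pi, Set.mem_Ioo, abs_lt]
  have det_toLin' : LinearMap.det M.toLin' = M.det := LinearMap.det_toLin' M
  have h_vol : 2 ^ Fintype.card ι < MeasureTheory.volume (M.toLin' ⁻¹' box) := by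
    rw [MeasureTheory.Measure.addHaar_preimage_linearMap _ (det_toLin' ▸ hM), det_toLin',
      volume_pi_Ioo_neg_self hr, ← ENNReal.ofReal_mul (abs_nonneg _), ← mul_assoc, abs_inv]
    have one_lt : 1 < |M.det|⁻¹ * ∏ j, r j := by
      rwa [← div_eq_inv_mul, one_lt_div (abs_pos.mpr hM)]
    calc (2 : ENNReal) ^ Fintype.card ι = ENNReal.ofReal (2 ^ Fintype.card ι) := by
          simp [ENNReal.ofReal_pow]
      _ < ENNReal.ofReal (|M.det|⁻¹ * (∏ j, r j) * 2 ^ Fintype.card ι) := by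
          refine (ENNReal.ofReal_lt_ofReal_iff_of_nonneg (by positivity)).mpr ?_
          exact lt_mul_of_one_lt_left (by positivity) one_lt
  have h_symm : ∀ x ∈ M.toLin' ⁻¹' box, -x ∈ M.toLin' ⁻¹' box := by
    intro x hx
    rw [Set.mem_preimage, mem_box] at hx ⊢
    simpa only [map_neg, Pi.neg_apply, abs_neg] using hx
  have h_conv : Convex ℝ (M.toLin' ⁻¹' box) :=
    (convex_pi fun _ _ ↦ convex_Ioo _ _).linear_preimage M.toLin'
  obtain ⟨c, hc, hc_mem⟩ := exists_int_ne_zero_mem_of_two_pow_card_lt_volume h_symm h_conv h_vol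
  exact ⟨c, hc, mem_box.mp hc_mem⟩

theorem algebraMap_discr_eq_det_sq {K L E ι : Type*} [Field K] [Field L] [Field E] [Algebra K L]
    [Algebra K E] [FiniteDimensional K L] [Algebra.IsSeparable K L] [Fintype ι] [DecidableEq ι]
    (hι : finrank K L = Fintype.card ι) {σ : ι → L →ₐ[K] E} (hσ : Function.Injective σ)
    (v : ι → L) :
    algebraMap K E (Algebra.discr K v) = (Matrix.of fun j i ↦ σ j (v i)).det ^ 2 := by
  let Ω := AlgebraicClosure E
  let toΩ : E →ₐ[K] Ω := IsScalarTower.toAlgHom K E Ω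
  let τ : ι → L →ₐ[K] Ω := fun j ↦ toΩ.comp (σ j)
  have τ_injective : Function.Injective τ := fun j k hjk ↦
    hσ (AlgHom.ext fun x ↦ toΩ.injective (DFunLike.congr_fun hjk x))
  have τ_bijective : Function.Bijective τ :=
    (Fintype.bijective_iff_injective_and_card τ).mpr ⟨τ_injective, by rw [AlgHom.card, hι]⟩
  apply toΩ.injective
  calc toΩ (algebraMap K E (Algebra.discr K v)) = algebraMap K Ω (Algebra.discr K v) :=
        toΩ.commutes _
    _ = (Algebra.embeddingsMatrixReindex K Ω v (Equiv.ofBijective τ τ_bijective)).det ^ 2 :=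
        Algebra.discr_eq_det_embeddingsMatrixReindex_pow_two K Ω v _
    _ = (toΩ.mapMatrix (Matrix.of fun j i ↦ σ j (v i))).det ^ 2 := by
        rw [← Matrix.det_transpose]
        rfl
    _ = toΩ ((Matrix.of fun j i ↦ σ j (v i)).det ^ 2) := by rw [map_pow, AlgHom.map_det]

theorem exists_ne_zero_mem_span_int_forall_abs_lt {F ι : Type*} [Field F] [NumberField F]
    [Fintype ι] [DecidableEq ι] (v : Basis ι ℚ F) {σ : ι → F →+* ℝ} (hσ : Function.Injective σ)
    {r : ι → ℝ} (hr : ∀ j, 0 ≤ r j) (hv : √|((Algebra.discr ℚ v : ℚ) : ℝ)| < ∏ j, r j) :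
    ∃ γ ∈ Submodule.span ℤ (Set.range v), γ ≠ 0 ∧ ∀ j, |σ j γ| < r j := by
  let M : Matrix ι ι ℝ := Matrix.of fun j i ↦ σ j (v i)
  have discr_eq : ((Algebra.discr ℚ v : ℚ) : ℝ) = M.det ^ 2 :=
    algebraMap_discr_eq_det_sq (finrank_eq_card_basis v) (σ := fun j ↦ (σ j).toRatAlgHom)
      ((RingHom.equivRatAlgHom F ℝ).injective.comp hσ) v
  have det_ne_zero : M.det ≠ 0 := by
    rw [← pow_ne_zero_iff two_ne_zero, ← discr_eq, Rat.cast_ne_zero]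
    exact Algebra.discr_not_zero_of_basis ℚ v
  rw [discr_eq, abs_sq, Real.sqrt_sq_eq_abs] at hv
  obtain ⟨c, hc, hcr⟩ := exists_int_ne_zero_forall_abs_mulVec_lt det_ne_zero hr hv
  refine ⟨∑ i, c i • v i, Submodule.mem_span_range_iff_exists_fun ℤ |>.mpr ⟨c, rfl⟩,
    fun h ↦ hc ?_, fun j ↦ ?_⟩
  · have v_linearIndependent : LinearIndependent ℤ v := v.linearIndependent.restrict_scalars' ℤ
    exact funext (Fintype.linearIndependent_iff.mp v_linearIndependent c h)
  · convert hcr j using 2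
    simp [M, Matrix.mulVec, dotProduct, mul_comm]

theorem linearIndependent_rat_coe_basis {F ι : Type*} [Ring F] [Algebra ℚ F] {O : Subring F}
    (b : Basis ι ℤ O) : LinearIndependent ℚ fun i ↦ (b i : F) :=
  (LinearIndependent.iff_fractionRing ℤ ℚ).mp <|
    b.linearIndependent.map' O.subtype.toAddMonoidHom.toIntLinearMap
      (LinearMap.ker_eq_bot.mpr Subtype.val_injective)

theorem eq_zero_of_isIntegral_of_mem_range_algebraMap_of_abs_map_lt_one {F E : Type*}
    [Ring F] [Algebra ℚ F] [Ring E] [LinearOrder E] [IsStrictOrderedRing E] {x : F}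
    (hx_int : IsIntegral ℤ x) (hx_rat : x ∈ Set.range (algebraMap ℚ F)) {σ : F →+* E}
    (hx : |σ x| < 1) : x = 0 := by
  have : Nontrivial F := σ.domain_nontrivial
  obtain ⟨q, rfl⟩ := hx_rat
  obtain ⟨n, rfl⟩ := IsIntegrallyClosed.isIntegral_iff.mp
    ((isIntegral_algebraMap_iff (algebraMap ℚ F).injective).mp hx_int)
  have n_abs_lt_one : |n| < 1 := by
    simpa [← Int.cast_abs, ← Int.cast_one (R := E), -Int.cast_one] using hx
  simp [Int.abs_lt_one_iff.mp n_abs_lt_one]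

theorem sqrt_lt_sq_of_rpow_one_div_four_lt {x y : ℝ} (hx : 0 ≤ x) (h : x ^ ((1 : ℝ) / 4) < y) :
    √x < y ^ 2 := by
  calc √x = (x ^ ((1 : ℝ) / 4)) ^ 2 := by
        rw [Real.sqrt_eq_rpow, ← Real.rpow_mul_natCast hx]
        norm_num
    _ < y ^ 2 := pow_lt_pow_left₀ h (Real.rpow_nonneg hx _) two_ne_zero

theorem stmt_5_general {F ι : Type*} [Field F] [NumberField F] [Fintype ι] [DecidableEq ι]
    (hF : finrank ℚ F = Fintype.card ι) {σ : ι → F →+* ℝ} (hσ : Function.Injective σ)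
    {O : Subring F} (b : Basis ι ℤ O) {r : ι → ℝ} (hr : ∀ j, 0 ≤ r j)
    (hb : √|((Algebra.discr ℚ (fun i ↦ (b i : F)) : ℚ) : ℝ)| < ∏ j, r j)
    {j₀ : ι} (hj₀ : r j₀ ≤ 1) :
    ∃ γ ∈ O, γ ∉ Set.range (algebraMap ℚ F) ∧ ∀ j, |σ j γ| < r j := by
  have : Nonempty ι := ⟨j₀⟩
  let v : Basis ι ℚ F :=
    basisOfLinearIndependentOfCardEqFinrank (linearIndependent_rat_coe_basis b) hF.symm
  have coe_v : ⇑v = fun i ↦ (b i : F) := coe_basisOfLinearIndependentOfCardEqFinrank _ _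
  obtain ⟨γ, hγ_span, hγ_ne, hγ⟩ :=
    exists_ne_zero_mem_span_int_forall_abs_lt v hσ hr (by rwa [coe_v])
  have hγO : γ ∈ O := by
    refine Submodule.span_le (p := O.toAddSubgroup.toIntSubmodule) |>.mpr ?_ hγ_span
    rintro _ ⟨i, rfl⟩
    exact coe_v ▸ (b i).2
  have : Module.Finite ℤ O := .of_basis b
  have hγ_int : IsIntegral ℤ γ := (IsIntegral.of_finite ℤ (⟨γ, hγO⟩ : O)).map O.subtype.toIntAlgHom
  exact ⟨γ, hγO, fun hγ_rat ↦ hγ_ne <|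
    eq_zero_of_isIntegral_of_mem_range_algebraMap_of_abs_map_lt_one hγ_int hγ_rat
      ((hγ j₀).trans_le hj₀), hγ⟩

/-- Minkowski step, Case 2 of the geometry-of-numbers proposition.
Let `F` be a totally real cubic number field with (pairwise distinct) real embeddings
`σ₁, σ₂, σ₃ : F → ℝ`, and let `𝓞` be an order in `F`. Then for every real
`R > |Δ(𝓞)|^{1/4}` there is `γ ∈ 𝓞` with `γ ∉ ℚ`, `|σ₁(γ)| < 1`, `|σ₂(γ)| < R`
and `|σ₃(γ)| < R`. -/
theorem stmt_5
    (F : Type*) [Field F] [NumberField F]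
    (hF3 : finrank ℚ F = 3)
    (hFreal : ∀ φ : F →+* ℂ, ∀ x : F, (φ x).im = 0)
    (σ : Fin 3 → (F →+* ℝ))
    (hσ : Function.Injective σ)
    (O : Subring F)
    (hOint : ∀ x ∈ O, IsIntegral ℤ x)
    (b : Basis (Fin 3) ℤ O) :
    ∀ R : ℝ,
      |((Algebra.discr ℚ (fun i => (b i : F)) : ℚ) : ℝ)| ^ ((1 : ℝ)/4) < R →
      ∃ γ ∈ O, γ ∉ Set.range (algebraMap ℚ F) ∧
        |σ 0 γ| < 1 ∧ |σ 1 γ| < R ∧ |σ 2 γ| < R := by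
  intro R hR
  have hR₀ : 0 ≤ R := (Real.rpow_nonneg (abs_nonneg _) _).trans hR.le
  have hdiscr := sqrt_lt_sq_of_rpow_one_div_four_lt (abs_nonneg _) hR
  simpa [Fin.forall_fin_succ] using stmt_5_general (by simpa using hF3) hσ b (r := ![1, R, R])
    (by simp [Fin.forall_fin_succ, hR₀]) (by simpa [Fin.prod_univ_three, ← sq] using hdiscr)
    (j₀ := 0) le_rfl
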